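/- If ℓ(C) ≥ 3, then the minimal number of generators of the S-module D₀(f) (the smallest cardinality of a generating set) is exactly m − 1; that is, C is an (m−1)-syzygy curve. -/

import Mathlib

open MvPolynomial

noncomputable abbrev S : Type := MvPolynomial (Fin 3) ℂ

/-- The gradient `∇g = (g_x, g_y, g_z)` of a polynomial `g ∈ S = ℂ[x,y,z]`. -/
noncomputable def grad (g : S) : Fin 3 → S := fun t => pderiv t g

/-- The syzygy triple `ρ_j = Σ_{i≠j} (∏_{k≠i,j} f_k) (∇f_i × ∇f_j)`
of the 2-form `ω_j = df ∧ df_j/f_j`. -/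
noncomputable def rho {m : ℕ} (F : Fin m → S) (j : Fin m) : Fin 3 → S :=
  ∑ i ∈ Finset.univ.erase j,
    (∏ k ∈ (Finset.univ.erase j).erase i, F k) • crossProduct (grad (F i)) (grad (F j))

/-- The Jacobian syzygy module `D₀(f) = {(a,b,c) ∈ S³ : a f_x + b f_y + c f_z = 0}`. -/
noncomputable def D0 (f : S) : Submodule S (Fin 3 → S) where
  carrier := {v | ∑ t, v t * pderiv t f = 0}
  add_mem' {a b} ha hb := by
    simp only [Set.mem_setOf_eq, Pi.add_apply, add_mul, Finset.sum_add_distrib] at *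
    rw [ha, hb, add_zero]
  zero_mem' := by simp
  smul_mem' c v hv := by
    simp only [Set.mem_setOf_eq, Pi.smul_apply, smul_eq_mul, mul_assoc, ← Finset.mul_sum] at *
    rw [hv, mul_zero]

/-- The syzygy triple `σ^x = (0, f_z, −f_y)` of the 2-form `df ∧ dx`. -/
noncomputable def sigx (f : S) : Fin 3 → S := ![0, pderiv 2 f, -pderiv 1 f]
/-- The syzygy triple `σ^y = (−f_z, 0, f_x)` of the 2-form `df ∧ dy`. -/
noncomputable def sigy (f : S) : Fin 3 → S := ![-pderiv 2 f, 0, pderiv 0 f]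
/-- The syzygy triple `σ^z = (f_y, −f_x, 0)` of the 2-form `df ∧ dz`. -/
noncomputable def sigz (f : S) : Fin 3 → S := ![pderiv 1 f, -pderiv 0 f, 0]

/-!
Let `v` be a Jacobian syzygy of `f = ∏ j, F j`, and let `X` be the Euler vector field. Smoothness of
`F j = 0` makes the Koszul complex of `∇F_j` exact, so that `X ⨯₃ v` is congruent to `b_j • ∇F_j`
modulo `F j`. Comparing these congruences at a node shows that `b_j` lies in the ideal
`(F_j, f / F_j)` away from the origin, hence everywhere, because polynomials in three variables have
depth three. Therefore `X ⨯₃ v` is a logarithmic form `f • ∑ j, a_j • ∇F_j / F_j` up to a multiple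
of `f`, and that multiple is absorbed when the gradients, three of which belong to independent
lines, span everything. Taking the cross product with `∇f` turns `X ⨯₃ v` into a nonzero multiple
of `v`, by Euler's identity, and the logarithmic form into a combination of the syzygies `ρ_j`.

These generators satisfy `∑ j, ρ_j = 0`. In any relation `∑ j, a_j • ρ_j = 0`, Euler's identity
makes each `(deg f) • a_j` congruent modulo `F_j` to one polynomial independent of `j`, so all `a_j`
have the same constant term. Hence one generator can be dropped, and no more.
-/

open Matrix RingTheory.Sequence

section Ring

variable {R : Type*} [CommRing R]

theorem dvd_of_forall_dvd_mul [IsDomain R] [IsGCDMonoid R] {ι : Type*} [Finite ι]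
    {g : ι → R} (hg : ∀ d, (∀ t, d ∣ g t) → IsUnit d) {a u : R} (h : ∀ t, a ∣ u * g t) :
    a ∣ u := by
  obtain ⟨_⟩ := nonempty_fintype ι
  obtain ⟨_⟩ : Nonempty (NormalizedGCDMonoid R) := inferInstance
  have hunit : IsUnit (Finset.univ.gcd g) := hg _ fun t => Finset.gcd_dvd (Finset.mem_univ t)
  have hdvd : a ∣ u * Finset.univ.gcd g :=
    (Finset.dvd_gcd fun t _ => h t).trans (Finset.gcd_mul_left' Finset.univ g u).dvd
  exact hunit.dvd_mul_right.mp hdvd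

theorem exists_eq_smul_of_mul_comm [IsDomain R] [IsGCDMonoid R] {ι : Type*} [Finite ι]
    {g u : ι → R} (hg : ∀ d, (∀ t, d ∣ g t) → IsUnit d) (h : ∀ i j, u i * g j = u j * g i) :
    ∃ c : R, u = c • g := by
  obtain ⟨i, hi⟩ : ∃ i, g i ≠ 0 := by
    by_contra! hzero
    exact not_isUnit_zero (hg 0 fun t => by simp [hzero t])
  obtain ⟨c, hc⟩ : g i ∣ u i := dvd_of_forall_dvd_mul hg fun t => ⟨u t, by rw [h i t, mul_comm]⟩
  refine ⟨c, funext fun j => mul_right_cancel₀ hi ?_⟩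
  rw [← h, hc, Pi.smul_apply, smul_eq_mul]
  ring

theorem cross_eq_zero_iff {u v : Fin 3 → R} : u ⨯₃ v = 0 ↔ ∀ i j, v i * u j = v j * u i := by
  have hcoord : u ⨯₃ v = 0 ↔ u 1 * v 2 - u 2 * v 1 = 0 ∧ u 2 * v 0 - u 0 * v 2 = 0 ∧
      u 0 * v 1 - u 1 * v 0 = 0 := by
    simp [cross_apply]
  rw [hcoord]
  constructor
  · rintro ⟨h0, h1, h2⟩ i j
    fin_cases i <;> fin_cases j <;> grind
  · grind

theorem map_cross {R' : Type*} [CommRing R'] (φ : R →+* R') (u v : Fin 3 → R) :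
    φ ∘ (u ⨯₃ v) = (φ ∘ u) ⨯₃ (φ ∘ v) := by
  ext i
  fin_cases i <;> simp [cross_apply]

theorem cross_mul_mem_span_pair {g g' s s' : Fin 3 → R} {a a' b b' : R}
    (h : a • s + b • g = a' • s' + b' • g') (t : Fin 3) :
    (g ⨯₃ g') t * b ∈ Ideal.span {a, a'} := by
  have hcross := congrFun (congrArg (crossProduct g') h) t
  simp only [map_add, map_smul, cross_self, Pi.add_apply, Pi.smul_apply, Pi.zero_apply,
    smul_eq_mul, mul_zero, add_zero] at hcross
  rw [← cross_anticomm, Pi.neg_apply]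
  exact Ideal.mem_span_pair.mpr ⟨(g' ⨯₃ s) t, -(g' ⨯₃ s') t, by linear_combination hcross⟩

theorem isWeaklyRegular_triple_iff {x y z : R} :
    IsWeaklyRegular R [x, y, z] ↔ (∀ a, x * a = 0 → a = 0) ∧ (∀ a, x ∣ y * a → x ∣ a) ∧
      ∀ a, z * a ∈ Ideal.span {x, y} → a ∈ Ideal.span {x, y} := by
  simp [isWeaklyRegular_iff_Fin, Fin.forall_fin_succ, isSMulRegular_quotient_iff_mem_of_smul_mem,
    Ideal.mem_span_singleton, Ideal.span_insert]

/-- The exact sequence `0 → R → (ι → R) → M → M ⧸ range ψ → 0` embeds the socle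
`Hom(R ⧸ (x, y, z), M ⧸ range ψ)` in `Ext²(R ⧸ (x, y, z), R)`, which vanishes. -/
theorem mem_range_of_smul_mem_range {ι M : Type*} [AddCommGroup M] [Module R M] {x y z : R}
    (hreg : IsWeaklyRegular R [x, y, z]) (hM : IsSMulRegular M x) {ψ : (ι → R) →ₗ[R] M}
    {g : ι → R} (hg : ∀ c : R, c • g = 0 → c = 0) (hker : LinearMap.ker ψ = R ∙ g) {u : M}
    (hxu : x • u ∈ LinearMap.range ψ) (hyu : y • u ∈ LinearMap.range ψ)
    (hzu : z • u ∈ LinearMap.range ψ) : u ∈ LinearMap.range ψ := by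
  obtain ⟨-, hy, hz⟩ := isWeaklyRegular_triple_iff.mp hreg
  obtain ⟨a, ha⟩ := hxu
  obtain ⟨b, hb⟩ := hyu
  obtain ⟨c, hc⟩ := hzu
  have exists_cocycle (p q : R) {v w : ι → R} (hv : ψ v = p • u) (hw : ψ w = q • u) :
      ∃ k : R, k • g = q • v - p • w := by
    rw [← Submodule.mem_span_singleton, ← hker, LinearMap.mem_ker, map_sub, map_smul, map_smul,
      hv, hw, smul_comm, sub_self]
  obtain ⟨kab, hab⟩ := exists_cocycle x y ha hb
  obtain ⟨kac, hac⟩ := exists_cocycle x z ha hc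
  obtain ⟨kbc, hbc⟩ := exists_cocycle y z hb hc
  have hcocycle : z * kab - y * kac + x * kbc = 0 :=
    hg _ (by simp only [add_smul, sub_smul, mul_smul, hab, hac, hbc]; module)
  obtain ⟨s, r, hkab⟩ := Ideal.mem_span_pair.mp <|
    hz kab (Ideal.mem_span_pair.mpr ⟨-kbc, kac, by linear_combination -hcocycle⟩)
  have hdvd (i : ι) : x ∣ a i - r * g i := by
    have habi := congrFun hab i
    simp only [Pi.smul_apply, Pi.sub_apply, smul_eq_mul] at habi
    exact hy _ ⟨b i + s * g i, by linear_combination -habi - g i * hkab⟩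
  choose v hv using hdvd
  refine ⟨v, hM ?_⟩
  have hψg : ψ g = 0 := LinearMap.mem_ker.mp (hker ▸ Submodule.mem_span_singleton_self g)
  have hav : x • v = a - r • g := funext fun i => (hv i).symm
  calc x • ψ v = ψ (a - r • g) := by rw [← hav, map_smul]
    _ = x • u := by rw [map_sub, map_smul, hψg, ha, smul_zero, sub_zero]

section MinimalGenerators

variable {M κ k : Type*} [AddCommGroup M] [Module R M] [Fintype κ] [Field k] {φ : R →+* k}
  {w : κ → M} (hw : ∀ a : κ → R, ∑ j, a j • w j = 0 → ∀ j, φ (a j) = 0)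
include hw

theorem card_le_card_of_span_eq_span_range {T : Finset M}
    (hT : Submodule.span R (T : Set M) = Submodule.span R (Set.range w)) :
    Fintype.card κ ≤ T.card := by
  classical
  have exists_coeff_w (t : T) : ∃ a : κ → R, ∑ j, a j • w j = (t : M) :=
    Submodule.mem_span_range_iff_exists_fun R |>.mp (hT ▸ Submodule.subset_span t.2)
  have exists_coeff_T (j : κ) : ∃ b : T → R, ∑ t, b t • (t : M) = w j := by
    refine Submodule.mem_span_range_iff_exists_fun R |>.mp ?_
    rw [Subtype.range_coe_subtype, Finset.setOfPred_mem, hT]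
    exact Submodule.subset_span ⟨j, rfl⟩
  choose A hA using exists_coeff_w
  choose B hB using exists_coeff_T
  have hrel (i : κ) : ∑ j, ((∑ t, B i t * A t j) - (1 : Matrix κ κ R) i j) • w j = 0 := by
    simp only [sub_smul, Finset.sum_sub_distrib, Finset.sum_smul, Matrix.one_apply, ite_smul,
      one_smul, zero_smul, Finset.sum_ite_eq, Finset.mem_univ, if_true]
    rw [Finset.sum_comm]
    simp only [mul_smul, ← Finset.smul_sum, hA, hB, sub_self]
  have hBA : (Matrix.of B).map φ * (Matrix.of A).map φ = 1 := by
    rw [← Matrix.map_mul, ← Matrix.map_one φ (map_zero φ) (map_one φ)]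
    ext i j
    simpa [sub_eq_zero, Matrix.mul_apply] using hw _ (hrel i) j
  calc Fintype.card κ = (1 : Matrix κ κ k).rank := Matrix.rank_one.symm
    _ ≤ ((Matrix.of B).map φ).rank := hBA ▸ Matrix.rank_mul_le_left _ _
    _ ≤ T.card := by simpa using ((Matrix.of B).map φ).rank_le_card_width

theorem isLeast_card_of_span_eq_span_range :
    IsLeast {n : ℕ | ∃ T : Finset M, T.card = n ∧
      Submodule.span R (T : Set M) = Submodule.span R (Set.range w)} (Fintype.card κ) := by
  classical
  constructor
  · have hspan : Submodule.span R (Finset.univ.image w : Set M) =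
        Submodule.span R (Set.range w) := by simp
    exact ⟨_, le_antisymm Finset.card_image_le (card_le_card_of_span_eq_span_range hw hspan), hspan⟩
  · rintro _ ⟨T, rfl, hT⟩
    exact card_le_card_of_span_eq_span_range hw hT

omit hw in
theorem isLeast_card_sub_one_of_sum_eq_zero [Nonempty κ] (hsum : ∑ j, w j = 0)
    (hw : ∀ a : κ → R, ∑ j, a j • w j = 0 → ∀ i j, φ (a i) = φ (a j)) :
    IsLeast {n : ℕ | ∃ T : Finset M, T.card = n ∧
      Submodule.span R (T : Set M) = Submodule.span R (Set.range w)} (Fintype.card κ - 1) := by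
  classical
  obtain ⟨j₀⟩ := ‹Nonempty κ›
  let w' : {j // j ≠ j₀} → M := fun j => w j
  have hspan : Submodule.span R (Set.range w) = Submodule.span R (Set.range w') := by
    refine le_antisymm (Submodule.span_le.mpr ?_) (Submodule.span_mono ?_)
    · rintro _ ⟨j, rfl⟩
      obtain rfl | hj := eq_or_ne j j₀
      · rw [Fintype.sum_eq_add_sum_subtype_ne w j] at hsum
        rw [eq_neg_of_add_eq_zero_left hsum]
        exact neg_mem (sum_mem fun i _ => Submodule.subset_span ⟨i, rfl⟩)
      · exact Submodule.subset_span ⟨⟨j, hj⟩, rfl⟩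
    · rintro _ ⟨j, rfl⟩
      exact ⟨j, rfl⟩
  have hw' (a : {j // j ≠ j₀} → R) (ha : ∑ j, a j • w' j = 0) (j) : φ (a j) = 0 := by
    let b : κ → R := fun j => if hj : j ≠ j₀ then a ⟨j, hj⟩ else 0
    have hb_ne (j : {j // j ≠ j₀}) : b j = a j := dif_pos j.2
    have hb_eq : b j₀ = 0 := dif_neg (not_not.mpr rfl)
    have hb : ∑ j, b j • w j = 0 := by
      simpa only [Fintype.sum_eq_add_sum_subtype_ne _ j₀, hb_ne, hb_eq, zero_smul,
        zero_add] using ha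
    rw [← hb_ne, hw b hb j j₀, hb_eq, map_zero]
  have hcard : Fintype.card {j // j ≠ j₀} = Fintype.card κ - 1 := by
    simp [Fintype.card_subtype_compl]
  rw [hspan, ← hcard]
  exact isLeast_card_of_span_eq_span_range hw'

end MinimalGenerators

end Ring

section Polynomial

theorem X_mul_mem_span_X_image_iff {σ R : Type*} [CommSemiring R] {s : Set σ} {i : σ}
    (hi : i ∉ s) {f : MvPolynomial σ R} :
    X i * f ∈ Ideal.span (X '' s) ↔ f ∈ Ideal.span (X '' s : Set (MvPolynomial σ R)) := by
  classical
  have hcoord (d : σ →₀ ℕ) {j : σ} (hj : j ∈ s) : (Finsupp.single i 1 + d : σ →₀ ℕ) j = d j := by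
    rw [Finsupp.add_apply, Finsupp.single_eq_of_ne (by rintro rfl; exact hi hj), zero_add]
  simp only [mem_ideal_span_X_image, support_X_mul, Finset.mem_map, addLeftEmbedding_apply,
    forall_exists_index, and_imp, forall_apply_eq_imp_iff₂]
  exact forall₂_congr fun d _ => exists_congr fun j => and_congr_right fun hj => by rw [hcoord d hj]

theorem isWeaklyRegular_map_X {σ R : Type*} [CommRing R] {l : List σ} (hl : l.Nodup) :
    IsWeaklyRegular (MvPolynomial σ R) (l.map (X : σ → MvPolynomial σ R)) := by
  have ofList_map_X (l' : List σ) :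
      Ideal.ofList (l'.map (X : σ → MvPolynomial σ R)) = Ideal.span (X '' {j | j ∈ l'}) := by
    simp [Ideal.ofList, Set.image]
  rw [isWeaklyRegular_iff]
  intro n hn
  rw [isSMulRegular_quotient_iff_mem_of_smul_mem, ← List.map_take, ofList_map_X]
  intro f hf
  simp only [List.getElem_map, smul_eq_mul, Ideal.mul_top] at hf ⊢
  refine (X_mul_mem_span_X_image_iff fun hmem => ?_).mp hf
  obtain ⟨k, hk, hkn⟩ := List.mem_take_iff_getElem.mp hmem
  have : k = n := hl.getElem_inj_iff.mp hkn
  omega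

section AlgClosed

variable {K σ : Type*} [Field K] [IsAlgClosed K] [Finite σ]

theorem exists_idealOfVars_pow_le {I : Ideal (MvPolynomial σ K)}
    (hI : ∀ p : σ → K, (∀ f ∈ I, eval p f = 0) → p = 0) : ∃ n : ℕ, idealOfVars σ K ^ n ≤ I := by
  refine Ideal.exists_pow_le_of_le_radical_of_fg ?_ (idealOfVars_fg σ K)
  rw [← vanishingIdeal_zeroLocus_eq_radical (K := K), Ideal.span_le]
  rintro _ ⟨i, rfl⟩
  simp only [SetLike.mem_coe, mem_vanishingIdeal_iff, mem_zeroLocus_iff, aeval_eq_eval]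
  intro p hp
  simp [hI p hp]

theorem exists_ne_zero_eval_eq_zero [Nontrivial σ] {f : MvPolynomial σ K} (hf : ¬ IsUnit f) :
    ∃ p : σ → K, p ≠ 0 ∧ eval p f = 0 := by
  by_contra! hzero
  obtain ⟨n, hn⟩ := exists_idealOfVars_pow_le (I := Ideal.span {f}) fun p hp => by
    by_contra hp0
    exact hzero p hp0 (hp f (Ideal.mem_span_singleton_self f))
  have hdvd (i : σ) : f ∣ X i ^ n := Ideal.mem_span_singleton.mp <|
    hn (Ideal.pow_mem_pow (Ideal.subset_span (Set.mem_range_self i)) n)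
  obtain ⟨i, j, hij⟩ := exists_pair_ne σ
  have hrel : IsRelPrime (X i : MvPolynomial σ K) (X j) :=
    (X_prime.irreducible.isRelPrime_iff_not_dvd).mpr (by simpa using hij)
  exact hf (hrel.pow (hdvd i) (hdvd j))

theorem mem_of_forall_X_smul_mem {M : Type*} [AddCommGroup M] [Module (MvPolynomial σ K) M]
    {N : Submodule (MvPolynomial σ K) M} (hN : ∀ u, (∀ i, (X i : MvPolynomial σ K) • u ∈ N) → u ∈ N)
    {u : M} (hu : ∀ p : σ → K, (∀ a : MvPolynomial σ K, a • u ∈ N → eval p a = 0) → p = 0) :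
    u ∈ N := by
  obtain ⟨n, hn⟩ := exists_idealOfVars_pow_le (I := N.colon {u})
    (by simpa [Submodule.mem_colon_singleton] using hu)
  replace hn : ∀ a ∈ idealOfVars σ K ^ n, a • u ∈ N :=
    fun a ha => Submodule.mem_colon_singleton.mp (hn ha)
  clear hu
  induction n generalizing u with
  | zero => simpa using hn 1 (by simp)
  | succ n ih =>
    refine hN u fun i => ih fun a ha => ?_
    rw [smul_smul]
    have hXi : X i ∈ idealOfVars σ K := Ideal.subset_span (Set.mem_range_self i)
    exact hn _ (pow_succ (idealOfVars σ K) n ▸ Ideal.mul_mem_mul ha hXi)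

end AlgClosed

section ThreeVariables

variable {K : Type*} [Field K] [IsAlgClosed K]

theorem mem_range_of_forall_eval_eq_zero {ι M : Type*} [AddCommGroup M]
    [Module (MvPolynomial (Fin 3) K) M] [Module.IsTorsionFree (MvPolynomial (Fin 3) K) M]
    {ψ : (ι → MvPolynomial (Fin 3) K) →ₗ[MvPolynomial (Fin 3) K] M}
    {g : ι → MvPolynomial (Fin 3) K} (hg : g ≠ 0)
    (hker : LinearMap.ker ψ = MvPolynomial (Fin 3) K ∙ g) {u : M}
    (hu : ∀ p : Fin 3 → K,
      (∀ a : MvPolynomial (Fin 3) K, a • u ∈ LinearMap.range ψ → eval p a = 0) → p = 0) :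
    u ∈ LinearMap.range ψ :=
  mem_of_forall_X_smul_mem (fun _ hXu => mem_range_of_smul_mem_range
    (isWeaklyRegular_map_X (l := [0, 1, 2]) (by decide)) (isRegular_X.isSMulRegular)
    (fun _ hc => (smul_eq_zero.mp hc).resolve_right hg) hker (hXu 0) (hXu 1) (hXu 2)) hu

theorem isUnit_of_forall_dvd {g : Fin 3 → MvPolynomial (Fin 3) K}
    (hg : ∀ p : Fin 3 → K, (∀ t, eval p (g t) = 0) → p = 0) {d : MvPolynomial (Fin 3) K}
    (hd : ∀ t, d ∣ g t) : IsUnit d := by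
  by_contra hunit
  obtain ⟨p, hp0, hpd⟩ := exists_ne_zero_eval_eq_zero hunit
  exact hp0 (hg p fun t => zero_dvd_iff.mp (hpd ▸ map_dvd (eval p) (hd t)))

theorem exists_cross_eq_of_dotProduct_eq_zero {g u : Fin 3 → MvPolynomial (Fin 3) K}
    (hg : ∀ p : Fin 3 → K, (∀ t, eval p (g t) = 0) → p = 0) (hu : g ⬝ᵥ u = 0) :
    ∃ s, g ⨯₃ s = u := by
  have hprim (d : MvPolynomial (Fin 3) K) : (∀ t, d ∣ g t) → IsUnit d := isUnit_of_forall_dvd hg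
  have hg0 : g ≠ 0 := by
    rintro rfl
    exact not_isUnit_zero (hprim 0 fun _ => dvd_rfl)
  have hker : LinearMap.ker (crossProduct g) = MvPolynomial (Fin 3) K ∙ g := by
    ext v
    rw [LinearMap.mem_ker, Submodule.mem_span_singleton]
    constructor
    · intro hv
      obtain ⟨c, rfl⟩ := exists_eq_smul_of_mul_comm hprim (cross_eq_zero_iff.mp hv)
      exact ⟨c, rfl⟩
    · rintro ⟨c, rfl⟩
      rw [map_smul, cross_self, smul_zero]
  refine mem_range_of_forall_eval_eq_zero hg0 hker fun p hp => hg p fun t => hp _ ?_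
  refine ⟨-(Pi.single t 1 ⨯₃ u), ?_⟩
  rw [map_neg, cross_cross_eq_smul_sub_smul', hu, zero_smul, zero_sub, neg_neg,
    single_one_dotProduct]

theorem mem_span_pair_of_forall_eval_eq_zero {f g b : MvPolynomial (Fin 3) K} (hf : f ≠ 0)
    (hfg : IsRelPrime f g)
    (hb : ∀ p : Fin 3 → K, (∀ a, a * b ∈ Ideal.span {f, g} → eval p a = 0) → p = 0) :
    b ∈ Ideal.span {f, g} := by
  let ψ : (Fin 2 → MvPolynomial (Fin 3) K) →ₗ[MvPolynomial (Fin 3) K] MvPolynomial (Fin 3) K :=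
    Fintype.linearCombination _ ![f, g]
  have hψ (v) : ψ v = v 0 * f + v 1 * g := by
    simp [ψ, Fintype.linearCombination_apply]
  have hrange : LinearMap.range ψ = Ideal.span {f, g} := by
    rw [Fintype.range_linearCombination, Matrix.range_cons_cons_empty]
  have hker : LinearMap.ker ψ = MvPolynomial (Fin 3) K ∙ ![g, -f] := by
    ext v
    rw [LinearMap.mem_ker, hψ, Submodule.mem_span_singleton]
    constructor
    · intro hv
      obtain ⟨c, hc⟩ : f ∣ v 1 := hfg.dvd_of_dvd_mul_right ⟨-v 0, by linear_combination hv⟩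
      have hv0 : v 0 = -c * g := mul_right_cancel₀ hf (by linear_combination hv - g * hc)
      exact ⟨-c, by ext1 i; fin_cases i <;> simp [hv0, hc, mul_comm]⟩
    · rintro ⟨c, rfl⟩
      simp only [Pi.smul_apply, smul_eq_mul, Matrix.cons_val_zero, Matrix.cons_val_one]
      ring
  have hne : ![g, -f] ≠ 0 := fun h => hf (by simpa using congrFun h 1)
  rw [← hrange] at hb ⊢
  exact mem_range_of_forall_eval_eq_zero hne hker hb

end ThreeVariables

end Polynomial

section LogForm

variable {σ R ι : Type*} [CommRing R]

/-- The gradient of a polynomial. -/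
noncomputable def polyGrad (f : MvPolynomial σ R) : σ → MvPolynomial σ R := fun t => pderiv t f

theorem polyGrad_mul (f g : MvPolynomial σ R) :
    polyGrad (f * g) = f • polyGrad g + g • polyGrad f := by
  ext1 t
  simp [polyGrad, Derivation.leibniz]

theorem exists_polyGrad_eq_C_of_isHomogeneous_one {f : MvPolynomial σ R} (hf : f.IsHomogeneous 1) :
    ∃ c : σ → R, polyGrad f = C ∘ c := by
  have hconst (t : σ) : ∃ c, pderiv t f = C c := by
    have hdeg : (pderiv t f).IsHomogeneous 0 := hf.pderiv
    exact ⟨_, totalDegree_eq_zero_iff_eq_C.mp ((totalDegree_zero_iff_isHomogeneous _).mpr hdeg)⟩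
  choose c hc using hconst
  exact ⟨c, funext hc⟩

theorem X_dotProduct_polyGrad [Fintype σ] {f : MvPolynomial σ R} {n : ℕ} (hf : f.IsHomogeneous n) :
    X ⬝ᵥ polyGrad f = n * f := by
  rw [← nsmul_eq_mul, ← hf.sum_X_mul_pderiv]
  rfl

theorem X_dotProduct_polyGrad_prod [Fintype σ] [Fintype ι] {F : ι → MvPolynomial σ R} {e : ι → ℕ}
    (hF : ∀ j, (F j).IsHomogeneous (e j)) :
    X ⬝ᵥ polyGrad (∏ i, F i) = ((∑ j, e j : ℕ) : MvPolynomial σ R) * ∏ i, F i :=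
  X_dotProduct_polyGrad (IsHomogeneous.prod _ _ _ fun j _ => hF j)

/-- The Jacobian syzygy module of `f`: the vectors of polynomials orthogonal to its gradient. -/
noncomputable def jacobianSyzygies [Fintype σ] (f : MvPolynomial σ R) :
    Submodule (MvPolynomial σ R) (σ → MvPolynomial σ R) :=
  LinearMap.ker (Fintype.linearCombination (MvPolynomial σ R) (polyGrad f))

theorem mem_jacobianSyzygies [Fintype σ] {f : MvPolynomial σ R} {v : σ → MvPolynomial σ R} :
    v ∈ jacobianSyzygies f ↔ polyGrad f ⬝ᵥ v = 0 := by
  rw [dotProduct_comm]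
  rfl

variable [Fintype ι] [DecidableEq ι]

/-- The product of all members of the family `F` except `F j`. -/
noncomputable def cofactor (F : ι → MvPolynomial σ R) (j : ι) : MvPolynomial σ R :=
  ∏ k ∈ Finset.univ.erase j, F k

/-- The numerator of the logarithmic form `∑ j, a j * dF j / F j`, written as a vector over the
common denominator `∏ j, F j`. -/
noncomputable def logForm (F : ι → MvPolynomial σ R) :
    (ι → MvPolynomial σ R) →ₗ[MvPolynomial σ R] σ → MvPolynomial σ R :=
  Fintype.linearCombination _ fun j => cofactor F j • polyGrad (F j)

variable (F : ι → MvPolynomial σ R)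

theorem mul_cofactor (j : ι) : F j * cofactor F j = ∏ i, F i :=
  Finset.mul_prod_erase _ _ (Finset.mem_univ j)

theorem logForm_apply (a : ι → MvPolynomial σ R) :
    logForm F a = ∑ j, a j • cofactor F j • polyGrad (F j) :=
  Fintype.linearCombination_apply ..

theorem polyGrad_prod : polyGrad (∏ i, F i) = logForm F 1 := by
  suffices ∀ s : Finset ι,
      polyGrad (∏ i ∈ s, F i) = ∑ j ∈ s, (∏ k ∈ s.erase j, F k) • polyGrad (F j) by
    simp only [this, logForm_apply, cofactor, Pi.one_apply, one_smul]
  intro s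
  induction s using Finset.induction_on with
  | empty => ext1 t; simp [polyGrad]
  | insert i s hi ih =>
    rw [Finset.prod_insert hi, polyGrad_mul, ih, Finset.sum_insert hi, Finset.erase_insert hi,
      add_comm, Finset.smul_sum]
    congr 1
    refine Finset.sum_congr rfl fun j hj => ?_
    have hij : i ≠ j := fun h => hi (h ▸ hj)
    rw [Finset.erase_insert_of_ne hij, Finset.prod_insert (by simp [hi]), smul_smul]

theorem exists_logForm_eq (a : ι → MvPolynomial σ R) (j : ι) :
    ∃ r, logForm F a = F j • r + (a j * cofactor F j) • polyGrad (F j) := by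
  refine ⟨∑ i ∈ Finset.univ.erase j,
    (a i * ∏ k ∈ (Finset.univ.erase i).erase j, F k) • polyGrad (F i), ?_⟩
  rw [logForm_apply, ← Finset.sum_erase_add _ _ (Finset.mem_univ j), Finset.smul_sum, mul_smul]
  congr 1
  refine Finset.sum_congr rfl fun i hi => ?_
  have hj : j ∈ Finset.univ.erase i := by simpa [eq_comm] using hi
  rw [cofactor, ← Finset.mul_prod_erase _ _ hj, smul_smul, smul_smul, mul_left_comm]

theorem logForm_mul_self (c : ι → MvPolynomial σ R) :
    logForm F (c * F) = (∏ i, F i) • ∑ j, c j • polyGrad (F j) := by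
  rw [logForm_apply, Finset.smul_sum]
  refine Finset.sum_congr rfl fun j _ => ?_
  rw [Pi.mul_apply, smul_smul, mul_assoc, mul_cofactor, smul_smul, mul_comm]

variable {F} in
theorem X_dotProduct_logForm [Fintype σ] {e : ι → ℕ} (hF : ∀ j, (F j).IsHomogeneous (e j))
    (a : ι → MvPolynomial σ R) : X ⬝ᵥ logForm F a = (∏ i, F i) * ∑ j, e j * a j := by
  rw [logForm_apply, dotProduct_sum, Finset.mul_sum]
  refine Finset.sum_congr rfl fun j _ => ?_
  rw [dotProduct_smul, dotProduct_smul, X_dotProduct_polyGrad (hF j), ← mul_cofactor F j,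
    smul_eq_mul, smul_eq_mul]
  ring

end LogForm

section LogSyzygy

variable {R ι : Type*} [CommRing R] [Fintype ι] [DecidableEq ι]

/-- The syzygy `ρ_j = ∑ i ≠ j, (∏ k ≠ i, j, F k) • (∇F_i ⨯₃ ∇F_j)`, with the sum over `i`
recognised as the gradient of `∏ i ≠ j, F i`. -/
noncomputable def logSyzygy (F : ι → MvPolynomial (Fin 3) R) (j : ι) :
    Fin 3 → MvPolynomial (Fin 3) R :=
  polyGrad (cofactor F j) ⨯₃ polyGrad (F j)

variable (F : ι → MvPolynomial (Fin 3) R)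

theorem smul_logSyzygy (j : ι) :
    F j • logSyzygy F j = polyGrad (∏ i, F i) ⨯₃ polyGrad (F j) := by
  simp only [← mul_cofactor F j, polyGrad_mul, map_add, map_smul, LinearMap.add_apply,
    LinearMap.smul_apply, cross_self, smul_zero, add_zero, logSyzygy]

theorem logSyzygy_mem_jacobianSyzygies (j : ι) :
    logSyzygy F j ∈ jacobianSyzygies (∏ i, F i) := by
  rw [mem_jacobianSyzygies, ← mul_cofactor F j, polyGrad_mul, add_dotProduct, smul_dotProduct,
    smul_dotProduct, logSyzygy, dot_self_cross, dot_cross_self, smul_zero, smul_zero, add_zero]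

theorem polyGrad_prod_cross_logForm (a : ι → MvPolynomial (Fin 3) R) :
    polyGrad (∏ i, F i) ⨯₃ logForm F a = (∏ i, F i) • ∑ j, a j • logSyzygy F j := by
  rw [logForm_apply, map_sum, Finset.smul_sum]
  refine Finset.sum_congr rfl fun j _ => ?_
  rw [map_smul, map_smul, ← smul_logSyzygy, ← mul_cofactor F j, smul_smul (cofactor F j),
    mul_comm (cofactor F j), smul_comm]

theorem sum_logSyzygy [IsDomain R] (hF : ∏ i, F i ≠ 0) : ∑ j, logSyzygy F j = 0 := by
  have hcross := polyGrad_prod_cross_logForm F 1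
  rw [← polyGrad_prod, cross_self] at hcross
  simpa [hF] using hcross.symm

variable {F} {e : ι → ℕ} (hF : ∀ j, (F j).IsHomogeneous (e j))
include hF

theorem sum_smul_logSyzygy_eq [IsDomain R] (hprod : ∏ i, F i ≠ 0)
    {v : Fin 3 → MvPolynomial (Fin 3) R} (hv : v ∈ jacobianSyzygies (∏ i, F i))
    {a : ι → MvPolynomial (Fin 3) R} (ha : X ⨯₃ v = logForm F a) :
    ∑ j, a j • logSyzygy F j = -(((∑ j, e j : ℕ) : MvPolynomial (Fin 3) R) • v) := by
  have hcross := polyGrad_prod_cross_logForm F a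
  rw [← ha, cross_cross_eq_smul_sub_smul', mem_jacobianSyzygies.mp hv,
    X_dotProduct_polyGrad_prod hF, zero_smul, zero_sub, mul_comm, mul_smul, ← smul_neg] at hcross
  exact (smul_right_injective _ hprod hcross).symm

theorem logForm_eq_zero_of_sum_smul_logSyzygy_eq_zero [IsDomain R] (hprod : ∏ i, F i ≠ 0)
    {a : ι → MvPolynomial (Fin 3) R} (ha : ∑ j, a j • logSyzygy F j = 0) :
    logForm F ((∑ j, (e j : MvPolynomial (Fin 3) R) * a j) • 1 -
      ((∑ j, e j : ℕ) : MvPolynomial (Fin 3) R) • a) = 0 := by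
  have hX : X ⨯₃ (polyGrad (∏ i, F i) ⨯₃ logForm F a) = 0 := by
    rw [polyGrad_prod_cross_logForm, ha, smul_zero, map_zero]
  rw [cross_cross_eq_smul_sub_smul', X_dotProduct_logForm hF, dotProduct_comm,
    X_dotProduct_polyGrad_prod hF, mul_comm (Nat.cast _), mul_smul, mul_smul, ← smul_sub,
    polyGrad_prod, ← map_smul, ← map_smul, ← map_sub] at hX
  exact (smul_eq_zero_iff_right hprod).mp hX

end LogSyzygy

section Curve

variable {K ι : Type*} [Field K]

/-- The polynomials `F j`, homogeneous of degrees `e j`, define smooth plane projective curves whose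
union is a normal crossing divisor. Points of the projective plane are given by nonzero vectors, so
smoothness says that the gradient vanishes at the origin only. -/
structure IsSmoothNormalCrossing (F : ι → MvPolynomial (Fin 3) K) (e : ι → ℕ) : Prop where
  isHomogeneous : ∀ j, (F j).IsHomogeneous (e j)
  eq_zero_of_polyGrad_eq_zero : ∀ j, ∀ p : Fin 3 → K,
    (∀ t, eval p (polyGrad (F j) t) = 0) → p = 0
  linearIndependent : ∀ i j, i ≠ j → ∀ p : Fin 3 → K, p ≠ 0 → eval p (F i) = 0 →
    eval p (F j) = 0 → LinearIndependent K ![eval p ∘ polyGrad (F i), eval p ∘ polyGrad (F j)]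
  no_triple_point : ∀ i j k, i ≠ j → i ≠ k → j ≠ k → ∀ p : Fin 3 → K, p ≠ 0 →
    ¬(eval p (F i) = 0 ∧ eval p (F j) = 0 ∧ eval p (F k) = 0)

namespace IsSmoothNormalCrossing

variable {F : ι → MvPolynomial (Fin 3) K} {e : ι → ℕ} (hF : IsSmoothNormalCrossing F e)
include hF

theorem ne_zero (j : ι) : F j ≠ 0 := fun hzero =>
  one_ne_zero (hF.eq_zero_of_polyGrad_eq_zero j 1 (by simp [hzero, polyGrad]))

theorem prod_ne_zero [Fintype ι] : ∏ j, F j ≠ 0 :=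
  Finset.prod_ne_zero_iff.mpr fun j _ => hF.ne_zero j

theorem degree_ne_zero (j : ι) : e j ≠ 0 := by
  intro he
  have hconst : F j = C (coeff 0 (F j)) := totalDegree_eq_zero_iff_eq_C.mp <|
    (totalDegree_zero_iff_isHomogeneous _).mpr (he ▸ hF.isHomogeneous j)
  refine one_ne_zero (hF.eq_zero_of_polyGrad_eq_zero j 1 fun t => ?_)
  rw [polyGrad, hconst, pderiv_C, map_zero]

theorem constantCoeff_eq_zero (j : ι) : constantCoeff (F j) = 0 :=
  (hF.isHomogeneous j).coeff_eq_zero (by simpa using (hF.degree_ne_zero j).symm)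

theorem exists_cross_polyGrad_ne_zero {i j : ι} (hij : i ≠ j) {p : Fin 3 → K} (hp : p ≠ 0)
    (hi : eval p (F i) = 0) (hj : eval p (F j) = 0) :
    ∃ t, eval p ((polyGrad (F i) ⨯₃ polyGrad (F j)) t) ≠ 0 := by
  have hcross := crossProduct_ne_zero_iff_linearIndependent.mpr
    (hF.linearIndependent i j hij p hp hi hj)
  rwa [← map_cross, Function.ne_iff] at hcross

theorem span_range_polyGrad_eq_top [Fintype ι]
    (hl : 3 ≤ (Finset.univ.filter fun j => e j = 1).card) :
    Submodule.span (MvPolynomial (Fin 3) K) (Set.range fun j => polyGrad (F j)) = ⊤ := by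
  rw [← Fintype.card_subtype, ← Fintype.card_fin 3] at hl
  obtain ⟨n⟩ := Function.Embedding.nonempty_of_card_le hl
  have hhom (i : Fin 3) : (F (n i)).IsHomogeneous 1 := by
    simpa only [(n i).2] using hF.isHomogeneous (n i)
  choose M hM using fun i => exists_polyGrad_eq_C_of_isHomogeneous_one (hhom i)
  have heval (p : Fin 3 → K) (i : Fin 3) : eval p (F (n i)) = (Matrix.of M *ᵥ p) i := by
    have heuler := congrArg (eval p) (X_dotProduct_polyGrad (hhom i))
    simpa [hM, dotProduct, Matrix.mulVec, mul_comm] using heuler.symm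
  have hdet : (Matrix.of M).det ≠ 0 := by
    intro hdet
    obtain ⟨p, hp, hMp⟩ := Matrix.exists_mulVec_eq_zero_iff.mpr hdet
    have hne {i j : Fin 3} (hij : i ≠ j) : (n i : ι) ≠ n j :=
      fun h => hij (n.injective (Subtype.ext h))
    refine hF.no_triple_point (n 0) (n 1) (n 2) (hne (by decide)) (hne (by decide))
      (hne (by decide)) p hp ?_
    simp only [heval, hMp, Pi.zero_apply, and_self]
  have hunit : IsUnit ((Matrix.of M).map (C : K →+* MvPolynomial (Fin 3) K)) :=
    ((Matrix.isUnit_iff_isUnit_det _).mpr hdet.isUnit).map C.mapMatrix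
  refine Submodule.eq_top_iff'.mpr fun s => ?_
  obtain ⟨c, rfl⟩ := Matrix.vecMul_surjective_iff_isUnit.mpr hunit s
  have hrow : c ᵥ* (Matrix.of M).map C = ∑ i, c i • polyGrad (F (n i)) := by
    ext1 t
    simp [Matrix.vecMul, dotProduct, hM]
  simp only [hrow]
  exact sum_mem fun i _ => Submodule.smul_mem _ _ (Submodule.subset_span ⟨n i, rfl⟩)

variable [IsAlgClosed K]

theorem isUnit_of_forall_dvd_polyGrad (j : ι) (d : MvPolynomial (Fin 3) K)
    (hd : ∀ t, d ∣ polyGrad (F j) t) : IsUnit d :=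
  isUnit_of_forall_dvd (hF.eq_zero_of_polyGrad_eq_zero j) hd

theorem isRelPrime {i j : ι} (hij : i ≠ j) : IsRelPrime (F i) (F j) := by
  rintro d ⟨a, ha⟩ ⟨b, hb⟩
  by_contra hunit
  obtain ⟨p, hp, hdp⟩ := exists_ne_zero_eval_eq_zero hunit
  obtain ⟨t, ht⟩ := hF.exists_cross_polyGrad_ne_zero hij hp (by simp [ha, hdp]) (by simp [hb, hdp])
  apply ht
  have hcross : polyGrad (F i) ⨯₃ polyGrad (F j) =
      d • (polyGrad a ⨯₃ polyGrad (F j) + a • (polyGrad d ⨯₃ polyGrad b)) := by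
    simp only [ha, hb, polyGrad_mul, map_add, map_smul, LinearMap.add_apply, LinearMap.smul_apply,
      cross_self]
    module
  rw [hcross, Pi.smul_apply, smul_eq_mul, map_mul, hdp, zero_mul]

variable [Fintype ι] [DecidableEq ι]

theorem isRelPrime_cofactor (j : ι) : IsRelPrime (F j) (cofactor F j) :=
  IsRelPrime.prod_right fun _ hk => hF.isRelPrime (Finset.ne_of_mem_erase hk).symm

theorem dvd_of_logForm_eq_zero {a : ι → MvPolynomial (Fin 3) K} (ha : logForm F a = 0) (j : ι) :
    F j ∣ a j := by
  obtain ⟨r, hr⟩ := exists_logForm_eq F a j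
  refine (hF.isRelPrime_cofactor j).dvd_of_dvd_mul_right <|
    dvd_of_forall_dvd_mul (hF.isUnit_of_forall_dvd_polyGrad j) fun t => ⟨-r t, ?_⟩
  have hrt := congrFun (hr.symm.trans ha) t
  simp only [Pi.add_apply, Pi.smul_apply, smul_eq_mul, Pi.zero_apply] at hrt
  linear_combination hrt

section Residue

variable {v : Fin 3 → MvPolynomial (Fin 3) K}

omit [DecidableEq ι] in
theorem dvd_polyGrad_dotProduct (hv : v ∈ jacobianSyzygies (∏ i, F i)) (j : ι) :
    F j ∣ polyGrad (F j) ⬝ᵥ v := by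
  classical
  rw [mem_jacobianSyzygies, ← mul_cofactor F j, polyGrad_mul, add_dotProduct, smul_dotProduct,
    smul_dotProduct, smul_eq_mul, smul_eq_mul] at hv
  exact (hF.isRelPrime_cofactor j).dvd_of_dvd_mul_left
    ⟨-(polyGrad (cofactor F j) ⬝ᵥ v), by linear_combination hv⟩

omit [DecidableEq ι] in
theorem exists_cross_eq_residue (hv : v ∈ jacobianSyzygies (∏ i, F i)) (j : ι) :
    ∃ (s : Fin 3 → MvPolynomial (Fin 3) K) (b : MvPolynomial (Fin 3) K),
      X ⨯₃ v = F j • s + b • polyGrad (F j) := by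
  obtain ⟨h, hh⟩ := hF.dvd_polyGrad_dotProduct hv j
  have heuler := X_dotProduct_polyGrad (hF.isHomogeneous j)
  obtain ⟨s, hs⟩ := exists_cross_eq_of_dotProduct_eq_zero
    (u := h • X - (e j : MvPolynomial (Fin 3) K) • v)
    (hF.eq_zero_of_polyGrad_eq_zero j) (by
      rw [dotProduct_sub, dotProduct_smul, dotProduct_smul, hh, dotProduct_comm, heuler,
        smul_eq_mul, smul_eq_mul]
      ring)
  have hcross : polyGrad (F j) ⨯₃ (X ⨯₃ v - F j • s) = 0 := by
    rw [map_sub, map_smul, hs, cross_cross_eq_smul_sub_smul', hh, heuler]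
    module
  obtain ⟨b, hb⟩ := exists_eq_smul_of_mul_comm (hF.isUnit_of_forall_dvd_polyGrad j)
    (cross_eq_zero_iff.mp hcross)
  exact ⟨s, b, by rw [← hb, add_sub_cancel]⟩

theorem residue_mem_span_pair {w : Fin 3 → MvPolynomial (Fin 3) K}
    {s : ι → Fin 3 → MvPolynomial (Fin 3) K} {b : ι → MvPolynomial (Fin 3) K}
    (hw : ∀ k, w = F k • s k + b k • polyGrad (F k)) (j : ι) :
    b j ∈ Ideal.span {F j, cofactor F j} := by
  refine mem_span_pair_of_forall_eval_eq_zero (hF.ne_zero j) (hF.isRelPrime_cofactor j)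
    fun p hp => ?_
  by_contra hp0
  have hj : eval p (F j) = 0 := hp _ (Ideal.mul_mem_right _ _ (Ideal.subset_span (by simp)))
  have hcofactor : eval p (cofactor F j) = 0 :=
    hp _ (Ideal.mul_mem_right _ _ (Ideal.subset_span (by simp)))
  rw [cofactor, map_prod, Finset.prod_eq_zero_iff] at hcofactor
  obtain ⟨k, hk, hk0⟩ := hcofactor
  have hjk : j ≠ k := (Finset.ne_of_mem_erase hk).symm
  obtain ⟨t, ht⟩ := hF.exists_cross_polyGrad_ne_zero hjk hp0 hj hk0
  set c := ∏ l ∈ (Finset.univ.erase j).erase k, F l with hc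
  have hmul : F k * c = cofactor F j := Finset.mul_prod_erase _ _ hk
  have hc0 : eval p c ≠ 0 := by
    rw [hc, map_prod]
    refine Finset.prod_ne_zero_iff.mpr fun l hl hl0 => ?_
    simp only [Finset.mem_erase, Finset.mem_univ, and_true] at hl
    exact hF.no_triple_point j k l hjk hl.2.symm hl.1.symm p hp0 ⟨hj, hk0, hl0⟩
  obtain ⟨α, β, hαβ⟩ := Ideal.mem_span_pair.mp
    (cross_mul_mem_span_pair ((hw j).symm.trans (hw k)) t)
  have hvanish := hp (c * (polyGrad (F j) ⨯₃ polyGrad (F k)) t) <|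
    Ideal.mem_span_pair.mpr ⟨c * α, β, by linear_combination c * hαβ - β * hmul⟩
  rw [map_mul] at hvanish
  exact mul_ne_zero hc0 ht hvanish

theorem exists_cross_eq_logForm_add (hv : v ∈ jacobianSyzygies (∏ i, F i)) :
    ∃ a s, X ⨯₃ v = logForm F a + (∏ i, F i) • s := by
  choose s b hs using hF.exists_cross_eq_residue hv
  choose α a ha using fun j => Ideal.mem_span_pair.mp (hF.residue_mem_span_pair hs j)
  have hdvd (t : Fin 3) : (∏ i, F i) ∣ (X ⨯₃ v - logForm F a) t := by
    refine Fintype.prod_dvd_of_isRelPrime (fun _ _ hij => hF.isRelPrime hij) fun j => ?_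
    obtain ⟨r, hr⟩ := exists_logForm_eq F a j
    refine ⟨s j t + α j * polyGrad (F j) t - r t, ?_⟩
    rw [hs j, hr, ← ha j]
    simp only [Pi.sub_apply, Pi.add_apply, Pi.smul_apply, smul_eq_mul]
    ring
  choose r hr using hdvd
  exact ⟨a, r, eq_add_of_sub_eq' (funext hr)⟩

end Residue

theorem constantCoeff_eq_of_sum_smul_logSyzygy_eq_zero (hd : ((∑ j, e j : ℕ) : K) ≠ 0)
    {a : ι → MvPolynomial (Fin 3) K} (ha : ∑ j, a j • logSyzygy F j = 0) (i j : ι) :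
    constantCoeff (a i) = constantCoeff (a j) := by
  set G := ∑ j, (e j : MvPolynomial (Fin 3) K) * a j
  have hlog := logForm_eq_zero_of_sum_smul_logSyzygy_eq_zero hF.isHomogeneous hF.prod_ne_zero ha
  have hcoeff (k : ι) : constantCoeff G = ((∑ j, e j : ℕ) : K) * constantCoeff (a k) := by
    have hdvd := map_dvd constantCoeff (hF.dvd_of_logForm_eq_zero hlog k)
    rw [hF.constantCoeff_eq_zero, zero_dvd_iff] at hdvd
    simpa [G, sub_eq_zero] using hdvd
  exact mul_left_cancel₀ hd ((hcoeff i).symm.trans (hcoeff j))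

variable (hl : 3 ≤ (Finset.univ.filter fun j => e j = 1).card)
include hl

theorem exists_cross_eq_logForm {v : Fin 3 → MvPolynomial (Fin 3) K}
    (hv : v ∈ jacobianSyzygies (∏ i, F i)) : ∃ a, X ⨯₃ v = logForm F a := by
  obtain ⟨a, s, hs⟩ := hF.exists_cross_eq_logForm_add hv
  obtain ⟨c, rfl⟩ := (Submodule.mem_span_range_iff_exists_fun _).mp <|
    hF.span_range_polyGrad_eq_top hl ▸ Submodule.mem_top (x := s)
  exact ⟨a + c * F, by rw [hs, map_add, logForm_mul_self]⟩

theorem span_range_logSyzygy (hd : ((∑ j, e j : ℕ) : K) ≠ 0) :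
    Submodule.span (MvPolynomial (Fin 3) K) (Set.range (logSyzygy F)) =
      jacobianSyzygies (∏ i, F i) := by
  refine le_antisymm (Submodule.span_le.mpr ?_) fun v hv => ?_
  · rintro _ ⟨j, rfl⟩
    exact logSyzygy_mem_jacobianSyzygies F j
  · obtain ⟨a, ha⟩ := hF.exists_cross_eq_logForm hl hv
    have hsum := sum_smul_logSyzygy_eq hF.isHomogeneous hF.prod_ne_zero hv ha
    have hunit : IsUnit ((∑ j, e j : ℕ) : MvPolynomial (Fin 3) K) :=
      map_natCast (C : K →+* MvPolynomial (Fin 3) K) _ ▸ hd.isUnit.map C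
    rw [← Submodule.smul_mem_iff_of_isUnit _ hunit, ← neg_mem_iff, ← hsum]
    exact sum_mem fun j _ => Submodule.smul_mem _ _ (Submodule.subset_span ⟨j, rfl⟩)

end IsSmoothNormalCrossing

theorem numGenerators_of_ell_ge_three_general [IsAlgClosed K] [Fintype ι]
    {F : ι → MvPolynomial (Fin 3) K} {e : ι → ℕ} (hF : IsSmoothNormalCrossing F e)
    (hd : ((∑ j, e j : ℕ) : K) ≠ 0) (hl : 3 ≤ (Finset.univ.filter fun j => e j = 1).card) :
    IsLeast {n : ℕ | ∃ T : Finset (Fin 3 → MvPolynomial (Fin 3) K), T.card = n ∧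
      Submodule.span (MvPolynomial (Fin 3) K) (T : Set (Fin 3 → MvPolynomial (Fin 3) K)) =
        jacobianSyzygies (∏ i, F i)} (Fintype.card ι - 1) := by
  classical
  have : Nonempty ι := by
    by_contra! hempty
    simp at hd
  rw [← hF.span_range_logSyzygy hl hd]
  exact isLeast_card_sub_one_of_sum_eq_zero (φ := constantCoeff)
    (sum_logSyzygy F hF.prod_ne_zero)
    fun _ ha => hF.constantCoeff_eq_of_sum_smul_logSyzygy_eq_zero hd ha

end Curve

/-- if `ℓ(C) ≥ 3` then the minimal number of generators of the `S`-module
`D₀(f)` is exactly `m − 1`: `C` is an `(m−1)`-syzygy curve. -/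
theorem numGenerators_of_ell_ge_three
    (m : ℕ) (hm : 4 ≤ m) (F : Fin m → S) (e : Fin m → ℕ)
    (he : ∀ j, 1 ≤ e j)
    (hhom : ∀ j, (F j).IsHomogeneous (e j))
    (hsmooth : ∀ j, ∀ p : Fin 3 → ℂ,
      (∀ t, eval p (pderiv t (F j)) = 0) → p = 0)
    (hnc : ∀ i j : Fin m, i ≠ j → ∀ p : Fin 3 → ℂ, p ≠ 0 →
      eval p (F i) = 0 → eval p (F j) = 0 →
      LinearIndependent ℂ
        ![fun t => eval p (pderiv t (F i)), fun t => eval p (pderiv t (F j))])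
    (htriple : ∀ i j k : Fin m, i ≠ j → i ≠ k → j ≠ k → ∀ p : Fin 3 → ℂ, p ≠ 0 →
      ¬(eval p (F i) = 0 ∧ eval p (F j) = 0 ∧ eval p (F k) = 0))
    (hl : 3 ≤ (Finset.univ.filter (fun j => e j = 1)).card) :
    IsLeast {n : ℕ | ∃ T : Finset (Fin 3 → S),
        T.card = n ∧ Submodule.span S (T : Set (Fin 3 → S)) = D0 (∏ i, F i)}
      (m - 1) := by
  have hF : IsSmoothNormalCrossing F e := ⟨hhom, hsmooth, hnc, htriple⟩
  have hd : ((∑ j, e j : ℕ) : ℂ) ≠ 0 := by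
    have : 1 ≤ ∑ j, e j := (he ⟨0, by omega⟩).trans
      (Finset.single_le_sum_of_canonicallyOrdered (Finset.mem_univ _))
    exact_mod_cast Nat.one_le_iff_ne_zero.mp this
  have hD0 : D0 (∏ i, F i) = jacobianSyzygies (∏ i, F i) := rfl
  simpa only [hD0, Fintype.card_fin] using numGenerators_of_ell_ge_three_general hF hd hl
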